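/- arXiv:1501.03022 — 5 statements merged into one kernel-verified Lean document; each statement's English description precedes it below -/
import Mathlib

section
/- For every x ∈ ℝ^ℕ, every open set U ⊆ ℝ^ℕ containing x, and every ε > 0, the local orbit O(x, U, B_ε) of the translation action of ℓ¹ on ℝ^ℕ, where B_ε = {a ∈ ℓ¹ : ‖a‖₁ < ε}, is somewhere dense in ℝ^ℕ. In particular, every point of ℝ^ℕ is turbulent for the translation action of ℓ¹ on ℝ^ℕ. -/
/-!
The topology of `ℝ^ℕ` is locally convex, so `x` has a convex open neighbourhood `W ⊆ U`, and `W`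
lies in the closure of the local orbit. Indeed, a point `z ∈ W` that differs from `x` in only
finitely many coordinates is joined to `x` by a segment inside `W`, and cutting the segment into
`k` equal pieces gives steps of `ℓ¹`-norm `‖z - x‖₁ / k`, which is less than `ε` for large `k`
(`mem_ellOneLocalOrbit_of_convex`). Such points are dense in `W`: any `y ∈ W` is the limit of the
sequences agreeing with `y` below `n` and with `x` from `n` on.
-/

/-- The local orbit `O(x, U, B_ε)` of a point `x ∈ ℝ^ℕ` for the translation action
of `ℓ¹` on `ℝ^ℕ`, where `B_ε` is the open `ε`-ball around `0` in `ℓ¹`: the set of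
points reachable from `x` by finitely many translation steps by elements of `ℓ¹`
of `ℓ¹`-norm less than `ε`, never leaving `U`. -/
def ellOneLocalOrbit (x : ℕ → ℝ) (U : Set (ℕ → ℝ)) (ε : ℝ) : Set (ℕ → ℝ) :=
  {y | ∃ (k : ℕ) (p : ℕ → ℕ → ℝ), p 0 = x ∧ p k = y ∧ (∀ i ≤ k, p i ∈ U) ∧
    ∀ i < k, ∃ a : ℕ → ℝ, Summable (fun n => |a n|) ∧ (∑' n, |a n|) < ε ∧
      p (i + 1) = p i + a}

/-- An `ℓ¹`-translate of `x` lying in a convex set `W ∋ x` contained in `U` is reached from `x`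
by walking along the segment in sufficiently many equal steps. -/
lemma mem_ellOneLocalOrbit_of_convex {x z : ℕ → ℝ} {U W : Set (ℕ → ℝ)} {ε : ℝ} (hε : 0 < ε)
    (hW : Convex ℝ W) (hWU : W ⊆ U) (hx : x ∈ W) (hz : z ∈ W)
    (hs : Summable fun n => |z n - x n|) : z ∈ ellOneLocalOrbit x U ε := by
  obtain ⟨k, hk⟩ := exists_nat_gt ((∑' n, |z n - x n|) / ε)
  have hk0 : (0 : ℝ) < k :=
    lt_of_le_of_lt (div_nonneg (tsum_nonneg fun _ => abs_nonneg _) hε.le) hk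
  refine ⟨k, fun i => x + ((i : ℝ) / k) • (z - x), by simp, ?_, ?_, ?_⟩
  · simp [div_self hk0.ne']
  · intro i hi
    apply hWU
    refine hW.add_smul_sub_mem hx hz ⟨by positivity, ?_⟩
    rw [div_le_one hk0]
    exact_mod_cast hi
  · intro i _
    have habs : (fun n => |((k : ℝ)⁻¹ • (z - x)) n|) = fun n => (k : ℝ)⁻¹ * |z n - x n| := by
      funext n
      simp [abs_mul]
    refine ⟨(k : ℝ)⁻¹ • (z - x), ?_, ?_, ?_⟩
    · rw [habs]
      exact hs.mul_left _
    · rw [habs, tsum_mul_left, inv_mul_lt_iff₀ hk0]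
      exact (div_lt_iff₀ hε).1 hk
    · funext n
      simp only [Pi.add_apply, Pi.smul_apply, Pi.sub_apply, smul_eq_mul]
      push_cast
      ring

/-- For every `x ∈ ℝ^ℕ`, every open `U ∋ x` and every `ε > 0`, the local orbit
`O(x, U, B_ε)` of the translation action of `ℓ¹` on `ℝ^ℕ` is somewhere dense;
that is, every point of `ℝ^ℕ` is turbulent for this action. -/
theorem stmt_4 (x : ℕ → ℝ) (U : Set (ℕ → ℝ)) (hU : IsOpen U) (hxU : x ∈ U)
    (ε : ℝ) (hε : 0 < ε) :
    (interior (closure (ellOneLocalOrbit x U ε))).Nonempty := by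
  obtain ⟨C, ⟨hCx, hC⟩, hCU⟩ :=
    (LocallyConvexSpace.convex_basis (𝕜 := ℝ) x).mem_iff.1 (hU.mem_nhds hxU)
  have hxW : x ∈ interior C := mem_interior_iff_mem_nhds.2 hCx
  refine ⟨x, interior_maximal ?_ isOpen_interior hxW⟩
  intro y hy
  have hlim : Filter.Tendsto (fun n i => if i < n then y i else x i) Filter.atTop (nhds y) := by
    refine tendsto_pi_nhds.2 fun i => tendsto_const_nhds.congr' ?_
    filter_upwards [Filter.eventually_gt_atTop i] with n hn
    simp [hn]
  refine mem_closure_of_tendsto hlim ?_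
  filter_upwards [hlim.eventually (isOpen_interior.mem_nhds hy)] with n hn
  refine mem_ellOneLocalOrbit_of_convex hε hC.interior (interior_subset.trans hCU) hxW hn ?_
  refine summable_of_ne_finset_zero (s := Finset.range n) fun i hi => ?_
  simp [Finset.mem_range.not.1 hi]
end

section
/- Let X be a standard Borel space and E an equivalence relation on X. Suppose there is a Borel function f : (0,1)^ℕ → X such that (1) f(t) E f(s) whenever t, s ∈ (0,1)^ℕ satisfy ∑ₙ |tₙ − sₙ| < ∞, and (2) the preimage under f of every E-equivalence class is meager in (0,1)^ℕ. Then E is not smooth. -/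
/-!
If `g` witnessed smoothness, then `h = g ∘ f` would be a Borel real-valued function on `(0,1)^ℕ`
that does not change when finitely many coordinates of its argument are altered, since such an
alteration gives a summable difference. The topological zero-one law
(`residual_or_residual_compl`) says that a Borel set invariant under finite alterations is meager
or comeager. Applied to the preimages under `h` of a countable separating family of Borel sets, it
forces `h` to be constant on a comeager set. Thus some fibre of `h` is comeager; but that fibre is
the preimage under `f` of a single `E`-class, hence meager, contradicting the Baire category
theorem.

The zero-one law is proved by moving one open set onto another: `(0,1)` is homogeneous, so given
points `x`, `y` and a finite set of coordinates, a homeomorphism acting on these coordinates only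
sends `x` to a point that agrees with `y` on them.
-/

open Set Filter Topology

/-- The open unit interval is homogeneous: conjugate a translation of `ℝ` by the sigmoid. -/
lemma exists_homeomorph_Ioo (a b : Ioo (0 : ℝ) 1) :
    ∃ φ : Ioo (0 : ℝ) 1 ≃ₜ Ioo (0 : ℝ) 1, φ a = b := by
  let e : ℝ ≃ₜ Ioo (0 : ℝ) 1 :=
    ((Real.sigmoid_strictMono.orderIso).trans
      (OrderIso.setCongr _ _ Real.range_sigmoid)).toHomeomorph
  refine ⟨e.symm.trans ((Homeomorph.addRight (e.symm b - e.symm a)).trans e), ?_⟩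
  simp

/-- Topological zero-one law for `(0,1)^ℕ`: a Borel set that is invariant under altering finitely
many coordinates is comeager or has comeager complement. -/
lemma residual_or_residual_compl (B : Set (ℕ → Ioo (0 : ℝ) 1)) (hB : MeasurableSet B)
    (hinv : ∀ (F : Finset ℕ) (t s : ℕ → Ioo (0 : ℝ) 1),
      (∀ n ∉ F, t n = s n) → (t ∈ B ↔ s ∈ B)) :
    B ∈ residual (ℕ → Ioo (0 : ℝ) 1) ∨ Bᶜ ∈ residual (ℕ → Ioo (0 : ℝ) 1) := by
  have : PolishSpace (Ioo (0 : ℝ) 1) := isOpen_Ioo.polishSpace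
  obtain ⟨u, hu, hBu⟩ := hB.residualEq_isOpen
  obtain ⟨v, hv, hBv⟩ := hB.compl.residualEq_isOpen
  rcases u.eq_empty_or_nonempty with rfl | ⟨x, hx⟩
  · right
    filter_upwards [hBu.mem_iff] with t ht
    simpa using ht
  rcases v.eq_empty_or_nonempty with rfl | ⟨y, hy⟩
  · left
    filter_upwards [hBv.mem_iff] with t ht
    simpa using ht
  exfalso
  -- `F` is a finite set of coordinates on which membership in `v` near `y` depends.
  obtain ⟨F, w, hw, hwv⟩ := isOpen_pi_iff.1 hv y hy
  choose ψ hψ using fun n => exists_homeomorph_Ioo (x n) (y n)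
  classical
  let φ : (ℕ → Ioo (0 : ℝ) 1) ≃ₜ (ℕ → Ioo (0 : ℝ) 1) :=
    Homeomorph.piCongrRight fun n => if n ∈ F then ψ n else Homeomorph.refl _
  have hφ_off : ∀ t, ∀ n ∉ F, φ t n = t n := fun t n hn => by simp [φ, hn]
  have hφx : φ x ∈ v := hwv fun n hn => by
    have hn' : n ∈ F := hn
    have : φ x n = y n := by simp [φ, hn', hψ]
    rw [this]
    exact (hw n hn').2
  have hφv : ∀ᶠ t in residual _, (φ t ∈ Bᶜ ↔ φ t ∈ v) :=
    (tendsto_residual_of_isOpenMap φ.continuous φ.isOpenMap).eventually hBv.mem_iff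
  have hdense : Dense {t | (t ∈ B ↔ t ∈ u) ∧ (φ t ∈ Bᶜ ↔ φ t ∈ v)} :=
    dense_of_mem_residual (hBu.mem_iff.and hφv)
  obtain ⟨t, ⟨htu, htv⟩, ht⟩ :=
    hdense.exists_mem_open (hu.inter (hv.preimage φ.continuous)) ⟨x, hx, hφx⟩
  exact htv.2 ht.2 ((hinv F (φ t) t (hφ_off t)).2 (htu.2 ht.1))

/-- Nonsmoothness criterion: if `E` is an equivalence relation on a standard Borel
space `X` and `f : (0,1)^ℕ → X` is a Borel function such that `f t E f s` whenever
`∑ₙ |tₙ - sₙ| < ∞`, and the preimage under `f` of every `E`-class is meager, then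
`E` is not smooth. -/
theorem stmt_5 {X : Type*} [MeasurableSpace X] [StandardBorelSpace X]
    (E : X → X → Prop) (hE : Equivalence E)
    (f : (ℕ → Set.Ioo (0 : ℝ) 1) → X) (hf : Measurable f)
    (h1 : ∀ t s : ℕ → Set.Ioo (0 : ℝ) 1,
      Summable (fun n => |(t n : ℝ) - (s n : ℝ)|) → E (f t) (f s))
    (h2 : ∀ x : X, IsMeagre {t : ℕ → Set.Ioo (0 : ℝ) 1 | E (f t) x}) :
    ¬ ∃ g : X → ℝ, Measurable g ∧ ∀ x y : X, (E x y ↔ g x = g y) := by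
  rintro ⟨g, hg, hgE⟩
  have : PolishSpace (Ioo (0 : ℝ) 1) := isOpen_Ioo.polishSpace
  have : Nonempty (Ioo (0 : ℝ) 1) := ⟨⟨1 / 2, by norm_num, by norm_num⟩⟩
  have hinv : ∀ (F : Finset ℕ) (t s : ℕ → Ioo (0 : ℝ) 1),
      (∀ n ∉ F, t n = s n) → g (f t) = g (f s) := fun F t s hts =>
    (hgE _ _).1 <| h1 t s <| summable_of_ne_finset_zero (s := F) fun n hn => by simp [hts n hn]
  obtain ⟨c, hc⟩ : ∃ c, (g ∘ f) =ᶠ[residual _] Function.const _ c := by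
    refine exists_eventuallyEq_const_of_forall_separating MeasurableSet fun U hU => ?_
    refine residual_or_residual_compl ((g ∘ f) ⁻¹' U) ((hg.comp hf) hU) fun F t s hts => ?_
    simp [hinv F t s hts]
  -- The comeager fibre over `c` is nonempty, so it is a full class preimage.
  obtain ⟨t₀, ht₀⟩ := (dense_of_mem_residual hc).nonempty
  have hmeagre : ∀ᶠ t in residual _, ¬ E (f t) (f t₀) := h2 (f t₀)
  obtain ⟨t, ht, ht'⟩ := (dense_of_mem_residual (hc.and hmeagre)).nonempty
  exact ht' ((hgE _ _).2 (Eq.trans ht (Eq.symm ht₀)))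
end

section
/- If X is a nonmeager subset of (0,1)^ℕ (with the product topology), then there exist t, s ∈ X such that |tₙ − sₙ| > 1/2 for infinitely many n ∈ ℕ. -/
/-!
A generic sequence `s` enters a prescribed open set `U n` at infinitely many coordinates `n`, as
soon as `U n` is nonempty for infinitely many `n` (`residual_frequently_mem`). Taking
`U n = {y | y ≠ 1/2}`, the nonmeager set `X` contains some `t` with `t n ≠ 1/2` infinitely often.
For each such `n` the open set `{y | 1/2 < |t n - y|}` is a nonempty subset of `(0,1)` (it contains
points near the endpoint farther from `t n`), so a second application to these sets gives `s ∈ X`.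
-/

open Filter Topology

theorem residual_frequently_mem {Y : Type*} [TopologicalSpace Y] (U : ℕ → Set Y)
    (hU : ∀ n, IsOpen (U n)) (hne : ∃ᶠ n in atTop, (U n).Nonempty) :
    {s : ℕ → Y | ∃ᶠ n in atTop, s n ∈ U n} ∈ residual (ℕ → Y) := by
  have hset : {s : ℕ → Y | ∃ᶠ n in atTop, s n ∈ U n} =
      ⋂ N : ℕ, {s : ℕ → Y | ∃ n, N ≤ n ∧ s n ∈ U n} := by
    ext s
    simp [frequently_atTop]
  rw [hset, countable_iInter_mem]
  intro N
  apply residual_of_dense_open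
  · simp only [Set.ofPred_exists, Set.ofPred_and]
    exact isOpen_iUnion fun n => isOpen_const.inter ((hU n).preimage (continuous_apply n))
  · intro x
    classical
    -- Changing `x` at the single coordinate `n` gives points converging to `x` as `n → ∞`.
    let y : ℕ → Y := fun n => if h : (U n).Nonempty then h.some else x n
    have hlim : Tendsto (fun n => Function.update x n (y n)) atTop (𝓝 x) := by
      rw [tendsto_pi_nhds]
      intro i
      refine tendsto_const_nhds.congr' ?_
      filter_upwards [eventually_gt_atTop i] with n hn
      rw [Function.update_of_ne hn.ne]
    refine mem_closure_of_frequently_of_tendsto ?_ hlim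
    refine (hne.and_eventually (eventually_ge_atTop N)).mono ?_
    rintro n ⟨h, hn⟩
    refine ⟨n, hn, ?_⟩
    simpa [y, h] using h.some_mem

theorem exists_mem_of_not_isMeagre {Z : Type*} [TopologicalSpace Z] {X R : Set Z}
    (hX : ¬ IsMeagre X) (hR : R ∈ residual Z) : ∃ z ∈ X, z ∈ R := by
  by_contra! h
  exact hX (mem_of_superset hR fun z hz hzX => h z hzX hz)

theorem exists_far_point (a : Set.Ioo (0 : ℝ) 1) (ha : (a : ℝ) ≠ 1 / 2) :
    {y : Set.Ioo (0 : ℝ) 1 | 1 / 2 < |(a : ℝ) - (y : ℝ)|}.Nonempty := by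
  obtain ⟨a, h0, h1⟩ := a
  simp only at ha
  -- The witness is the midpoint of `a ± 1/2` and the endpoint of `(0,1)` farther from `a`.
  rcases lt_or_gt_of_ne ha with h | h
  · refine ⟨⟨(a + 3 / 2) / 2, by constructor <;> linarith⟩, ?_⟩
    simp only [Set.mem_ofPred_eq, lt_abs]
    right; linarith
  · refine ⟨⟨(a - 1 / 2) / 2, by constructor <;> linarith⟩, ?_⟩
    simp only [Set.mem_ofPred_eq, lt_abs]
    left; linarith

/-- If `X` is a nonmeager subset of `(0,1)^ℕ` with the product topology, then there
are `t, s ∈ X` with `|tₙ - sₙ| > 1/2` for infinitely many `n`. -/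
theorem stmt_6 (X : Set (ℕ → Set.Ioo (0 : ℝ) 1)) (hX : ¬ IsMeagre X) :
    ∃ t ∈ X, ∃ s ∈ X, {n : ℕ | 1 / 2 < |(t n : ℝ) - (s n : ℝ)|}.Infinite := by
  obtain ⟨t, htX, ht⟩ := exists_mem_of_not_isMeagre hX
    (residual_frequently_mem (fun _ => {y : Set.Ioo (0 : ℝ) 1 | (y : ℝ) ≠ 1 / 2})
      (fun _ => isOpen_ne_fun continuous_subtype_val continuous_const)
      (Frequently.of_forall fun _ => ⟨⟨1 / 3, by norm_num, by norm_num⟩, by norm_num⟩))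
  obtain ⟨s, hsX, hs⟩ := exists_mem_of_not_isMeagre hX
    (residual_frequently_mem
      (fun n => {y : Set.Ioo (0 : ℝ) 1 | 1 / 2 < |(t n : ℝ) - (y : ℝ)|})
      (fun n => isOpen_lt continuous_const (by fun_prop))
      (Frequently.mono ht fun n hn => exists_far_point (t n) hn))
  exact ⟨t, htX, s, hsX, Nat.frequently_atTop_iff_infinite.mp hs⟩
end

section
/- Let h : ℝ^ℕ → ℝ be a Baire measurable function such that h(x + a) = h(x) for every x ∈ ℝ^ℕ and every a ∈ ℓ¹. Then there is a comeager subset of ℝ^ℕ on which h is constant. -/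
/-!
The proof is a topological zero-one law for `ℓ¹`. Finitely supported sequences lie in `ℓ¹` and
the orbit of every point under them is dense in `ℝ^ℕ`. If an invariant set `A` and its complement
were both non-meager, they would agree modulo meager sets with nonempty open sets `U` and `V`;
some translation `a` carries a point of `U` into `V`, so by the Baire category theorem a generic
point `z` near it satisfies `z ∈ A` and `z + a ∉ A`, contradicting invariance. Hence every
`h ⁻¹' W` with `W` open is meager or comeager, and since countably many open sets separate the
points of `ℝ`, `h` is constant on a comeager set.
-/

open Filter Topology

/-- Every orbit of the translation action of `ℓ¹` on `ℝ^ℕ` is dense. -/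
theorem exists_summable_add_mem (x y : ℕ → ℝ) {V : Set (ℕ → ℝ)} (hV : IsOpen V) (hy : y ∈ V) :
    ∃ a : ℕ → ℝ, Summable (fun n => |a n|) ∧ x + a ∈ V := by
  -- The truncations of `y - x` are finitely supported and converge pointwise to `y - x`.
  have ht : Tendsto (fun N : ℕ => x + fun n => if n < N then y n - x n else 0) atTop (𝓝 y) := by
    rw [tendsto_pi_nhds]
    intro n
    refine tendsto_const_nhds.congr' ?_
    filter_upwards [eventually_gt_atTop n] with N hN
    simp [hN]
  obtain ⟨N, hN⟩ := (ht.eventually (hV.mem_nhds hy)).exists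
  refine ⟨_, summable_of_ne_finset_zero (s := Finset.range N) ?_, hN⟩
  intro n hn
  simp [Finset.mem_range.not.mp hn]

/-- Topological zero-one law: an `ℓ¹`-invariant set with the Baire property is comeager or
meager. -/
theorem residual_or_residual_of_invariant {A : Set (ℕ → ℝ)} (hA : BaireMeasurableSet A)
    (hinv : ∀ x a : ℕ → ℝ, Summable (fun n => |a n|) → (x + a ∈ A ↔ x ∈ A)) :
    (∀ᶠ x in residual (ℕ → ℝ), x ∈ A) ∨ ∀ᶠ x in residual (ℕ → ℝ), x ∉ A := by
  obtain ⟨U, hU, hAU⟩ := hA.residualEq_isOpen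
  obtain ⟨V, hV, hAV⟩ := hA.compl.residualEq_isOpen
  rw [eventuallyEq_set] at hAU hAV
  rcases U.eq_empty_or_nonempty with rfl | ⟨x, hx⟩
  · exact Or.inr (hAU.mono fun z hz => by simpa using hz)
  rcases V.eq_empty_or_nonempty with rfl | ⟨y, hy⟩
  · exact Or.inl (hAV.mono fun z hz => by simpa using hz)
  obtain ⟨a, ha, hxa⟩ := exists_summable_add_mem x y hV hy
  -- Translation by `a` is a homeomorphism, so the relation between `Aᶜ` and `V` holds at `z + a`
  -- for generic `z`.
  have hAV' : ∀ᶠ z in residual (ℕ → ℝ), z + a ∈ Aᶜ ↔ z + a ∈ V :=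
    (tendsto_residual_of_isOpenMap (Homeomorph.addRight a).continuous
      (Homeomorph.addRight a).isOpenMap).eventually hAV
  have hW : IsOpen (U ∩ (· + a) ⁻¹' V) := hU.inter (hV.preimage (by fun_prop))
  obtain ⟨z, ⟨hzU, hzV⟩, hz, hz'⟩ :=
    (dense_of_mem_residual (hAU.and hAV')).inter_open_nonempty _ hW ⟨x, hx, hxa⟩
  exact absurd ((hinv z a ha).2 (hz.2 hzU)) (hz'.2 hzV)


/-- Let `h : ℝ^ℕ → ℝ` be a Baire measurable function (the preimage of every open set
has the Baire property) which is invariant under translation by elements of `ℓ¹`.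
Then `h` is constant on a comeager subset of `ℝ^ℕ`. -/
theorem stmt_13 (h : (ℕ → ℝ) → ℝ)
    (hBaire : ∀ U : Set ℝ, IsOpen U → BaireMeasurableSet (h ⁻¹' U))
    (hinv : ∀ (x a : ℕ → ℝ), Summable (fun n => |a n|) → h (x + a) = h x) :
    ∃ c : ℝ, {x : ℕ → ℝ | h x = c} ∈ residual (ℕ → ℝ) := by
  obtain ⟨c, hc⟩ := exists_eventuallyEq_const_of_forall_separating (f := h)
    (l := residual (ℕ → ℝ)) IsOpen fun U hU =>
      residual_or_residual_of_invariant (A := h ⁻¹' U) (hBaire U hU) fun x a ha => by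
        simp only [Set.mem_preimage, hinv x a ha]
  exact ⟨c, hc⟩
end

section
/- Let T be a tree on ℕ and let G_T be the associated subgroup of ℚ^(T). Then T has an infinite branch if and only if there exists a sequence (gₙ)ₙ∈ℕ of nonzero elements of G_T such that for every n ∈ ℕ, gₙ is infinitely pₙ-divisible in G_T and gₙ + gₙ₊₁ is infinitely qₙ-divisible in G_T. -/
/-!
A branch `b` gives the sequence `gₙ = δ_{b|n}`.

For the converse, fix a prime `r` and a weight `c : T → ℤ`, and let `φ_c` be the linear functional
`δ_u ↦ c u`. If `φ_c` takes `r`-integral values on the generators of `G_T`, then it does so on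
`G_T`, hence it vanishes on every infinitely `r`-divisible element
(`linearCombination_eq_zero_of_divisible`). This is used twice.

* With `r = pₙ` and `c` the indicator of a vertex of height `≠ n`, it shows that an infinitely
  `pₙ`-divisible element is supported on height `n` (`length_eq_of_divisible`).
* With `r = qₙ` and `c = 1` at a vertex `v` of height `n`, `-1` at its immediate successors and `0`
  elsewhere, the generators `(δ_v + δ_w)/(2qₙᵏ)` are killed, so `gₙ + gₙ₊₁` is killed as well. By
  the support statement this reads `gₙ(v) = ∑ gₙ₊₁(w)`, summed over the immediate successors `w`
  of `v`. So a vertex in the support of `gₙ` has a successor in the support of `gₙ₊₁`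
  (`exists_succ_ne_zero`).

Since `g₀` is nonzero and supported on height `0`, iterating the last fact from the root yields a
branch.
-/

/-- Given a tree `T` on `ℕ` (a set of finite sequences of naturals) and sequences
`p q : ℕ → ℕ` of primes, the group `G_T`: the subgroup of the group `ℚ^(T)` of
finitely supported functions `T → ℚ` generated by the elements `(1/(2·pₙᵏ))·δ_v`
for `k ∈ ℕ` and `v ∈ T` of height (length) `n`, together with the elements
`(1/(2·qₙᵏ))·(δ_v + δ_w)` for `k ∈ ℕ`, `v ∈ T` of height `n` and `w ∈ T` an
immediate successor of `v` in `T`. -/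
noncomputable def treeGroup (T : Set (List ℕ)) (p q : ℕ → ℕ) : AddSubgroup (↥T →₀ ℚ) :=
  AddSubgroup.closure
    ({f | ∃ (k : ℕ) (v : ↥T),
        f = (1 / (2 * (p v.1.length : ℚ) ^ k)) • Finsupp.single v (1 : ℚ)} ∪
     {f | ∃ (k : ℕ) (v w : ↥T) (m : ℕ), w.1 = v.1 ++ [m] ∧
        f = (1 / (2 * (q v.1.length : ℚ) ^ k)) •
              (Finsupp.single v (1 : ℚ) + Finsupp.single w (1 : ℚ))})

/-- Integer multiples of `1/(2sᵏ)` are `r`-integral for primes `s ≠ r` with `r` odd. -/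
lemma padicNorm_gen_le_one {r s : ℕ} (hr : r.Prime) (hr2 : Odd r) (hs : s.Prime) (hrs : s ≠ r)
    (k : ℕ) (z : ℤ) : padicNorm r (1 / (2 * (s : ℚ) ^ k) * z) ≤ 1 := by
  have : Fact r.Prime := ⟨hr⟩
  have : Fact s.Prime := ⟨hs⟩
  have : Fact (Nat.Prime 2) := ⟨Nat.prime_two⟩
  have h2 : padicNorm r ((2 : ℕ) : ℚ) = 1 := by
    apply padicNorm.padicNorm_of_prime_of_ne
    rintro rfl
    exact absurd hr2 (by decide)
  have h3 : padicNorm r (s : ℚ) = 1 := padicNorm.padicNorm_of_prime_of_ne hrs.symm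
  have h4 : padicNorm r ((s : ℚ) ^ k) = 1 := by
    induction k with
    | zero => simp
    | succ k ih => rw [pow_succ, padicNorm.mul, ih, h3, one_mul]
  rw [padicNorm.mul, padicNorm.div, padicNorm.mul, h4]
  push_cast at h2
  rw [h2]
  simpa using padicNorm.of_int (p := r) z

lemma eq_zero_of_padicNorm_le {r : ℕ} (hr : r.Prime) (x : ℚ)
    (h : ∀ k : ℕ, ∃ y : ℚ, padicNorm r y ≤ 1 ∧ x = (r : ℚ) ^ k * y) : x = 0 := by
  have : Fact r.Prime := ⟨hr⟩
  by_contra hx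
  have hpos : 0 < padicNorm r x := lt_of_le_of_ne (padicNorm.nonneg x) (padicNorm.nonzero hx).symm
  have hr1 : padicNorm r (r : ℚ) < 1 := padicNorm.padicNorm_p_lt_one_of_prime
  obtain ⟨k, hk⟩ := exists_pow_lt_of_lt_one hpos hr1
  obtain ⟨y, hy, rfl⟩ := h k
  have hpow : padicNorm r ((r : ℚ) ^ k) = padicNorm r (r : ℚ) ^ k := by
    clear hk h hx hpos
    induction k with
    | zero => simp
    | succ k ih => rw [pow_succ, padicNorm.mul, ih, pow_succ]
  rw [padicNorm.mul, hpow] at hk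
  have : padicNorm r (r : ℚ) ^ k * padicNorm r y ≤ padicNorm r (r : ℚ) ^ k :=
    mul_le_of_le_one_right (pow_nonneg (padicNorm.nonneg _) _) hy
  linarith

/-- The functional `δ_u ↦ c u` kills the infinitely `r`-divisible elements of `G_T` as soon as it
kills every generator whose denominator involves `r`. -/
lemma linearCombination_eq_zero_of_divisible {T : Set (List ℕ)} {p q : ℕ → ℕ}
    (hp : ∀ n, (p n).Prime) (hq : ∀ n, (q n).Prime) {r : ℕ} (hr : r.Prime) (hr2 : Odd r)
    (c : T → ℤ) (hcp : ∀ v : T, p v.1.length = r → c v = 0)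
    (hcq : ∀ (v w : T) (m : ℕ), w.1 = v.1 ++ [m] → q v.1.length = r → c v + c w = 0)
    (g : T →₀ ℚ) (hg : ∀ k : ℕ, ∃ h ∈ treeGroup T p q, g = (r ^ k : ℕ) • h) :
    Finsupp.linearCombination ℚ (fun u => (c u : ℚ)) g = 0 := by
  have : Fact r.Prime := ⟨hr⟩
  have key : ∀ h ∈ treeGroup T p q,
      padicNorm r (Finsupp.linearCombination ℚ (fun u => (c u : ℚ)) h) ≤ 1 := by
    intro h hh
    unfold treeGroup at hh
    induction hh using AddSubgroup.closure_induction with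
    | mem x hx =>
      rcases hx with ⟨k, v, rfl⟩ | ⟨k, v, w, m, hw, rfl⟩
      · rw [map_smul, Finsupp.linearCombination_single, one_smul, smul_eq_mul]
        by_cases e : p v.1.length = r
        · simp [hcp v e]
        · exact padicNorm_gen_le_one hr hr2 (hp _) e k _
      · rw [map_smul, map_add, Finsupp.linearCombination_single,
          Finsupp.linearCombination_single, one_smul, one_smul, smul_eq_mul, ← Int.cast_add]
        by_cases e : q v.1.length = r
        · simp [hcq v w m hw e]
        · exact padicNorm_gen_le_one hr hr2 (hq _) e k _
    | zero => simp
    | add x y _ _ hx hy =>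
      rw [map_add]
      exact padicNorm.nonarchimedean.trans (max_le hx hy)
    | neg x _ hx => rwa [map_neg, padicNorm.neg]
  refine eq_zero_of_padicNorm_le hr _ fun k => ?_
  obtain ⟨h, hh, e⟩ := hg k
  refine ⟨_, key h hh, ?_⟩
  rw [e, map_nsmul, nsmul_eq_mul]
  push_cast
  rfl

lemma length_eq_of_divisible {T : Set (List ℕ)} {p q : ℕ → ℕ}
    (hp : ∀ n, Nat.Prime (p n) ∧ Odd (p n)) (hq : ∀ n, Nat.Prime (q n) ∧ Odd (q n))
    (hpinj : Function.Injective p) (hpq : ∀ n m, p n ≠ q m) {n : ℕ} {g : T →₀ ℚ}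
    (hg : ∀ k : ℕ, ∃ h ∈ treeGroup T p q, g = (p n ^ k : ℕ) • h) {v : T} (hv : g v ≠ 0) :
    v.1.length = n := by
  classical
  by_contra hne
  apply hv
  have := linearCombination_eq_zero_of_divisible (fun n => (hp n).1) (fun n => (hq n).1)
    (hp n).1 (hp n).2 (fun u => if u = v then 1 else 0)
    (fun u hu => if_neg (by rintro rfl; exact hne (hpinj hu)))
    (fun u w m _ hu => absurd hu.symm (hpq _ _)) g hg
  simpa [Finsupp.linearCombination_apply, Finsupp.sum] using this

lemma exists_succ_ne_zero {T : Set (List ℕ)} {p q : ℕ → ℕ}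
    (hp : ∀ n, Nat.Prime (p n) ∧ Odd (p n)) (hq : ∀ n, Nat.Prime (q n) ∧ Odd (q n))
    (hqinj : Function.Injective q) (hpq : ∀ n m, p n ≠ q m) {n : ℕ} {g g' : T →₀ ℚ}
    (hg : ∀ v, g v ≠ 0 → v.1.length = n) (hg' : ∀ v, g' v ≠ 0 → v.1.length = n + 1)
    (hd : ∀ k : ℕ, ∃ h ∈ treeGroup T p q, g + g' = (q n ^ k : ℕ) • h) {v : T} (hv : g v ≠ 0) :
    ∃ (w : T) (m : ℕ), w.1 = v.1 ++ [m] ∧ g' w ≠ 0 := by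
  classical
  by_contra! hcon
  apply hv
  have hvn := hg v hv
  set c : T → ℤ := fun u => if u = v then 1 else if ∃ m, u.1 = v.1 ++ [m] then -1 else 0 with hc
  have hne : ∀ (w : T) (m : ℕ), w.1 = v.1 ++ [m] → w ≠ v := by
    rintro w m hw rfl
    simpa using congrArg List.length hw
  have h0 := linearCombination_eq_zero_of_divisible (fun n => (hp n).1) (fun n => (hq n).1)
    (hq n).1 (hq n).2 c (fun u hu => absurd hu (hpq _ _))
    (by
      intro u w m hw hu
      have hun : u.1.length = n := hqinj hu
      -- `u` has the same height as `v`, so it is not a successor of `v`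
      have hu' : ¬ ∃ m, u.1 = v.1 ++ [m] := by
        rintro ⟨m, hm⟩
        have := congrArg List.length hm
        simp at this
        omega
      by_cases huv : u = v
      · subst huv
        have h1 : ∃ m, w.1 = u.1 ++ [m] := ⟨m, hw⟩
        simp only [hc, if_pos h1, if_neg (hne w m hw), if_true]
        norm_num
      · have hwv : w ≠ v := by
          rintro rfl
          have := congrArg List.length hw
          simp at this
          omega
        have hw' : ¬ ∃ m, w.1 = v.1 ++ [m] := by
          rintro ⟨m', hm'⟩
          exact huv (Subtype.ext (List.append_inj_left' (hw.symm.trans hm') rfl))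
        simp only [hc, if_neg huv, if_neg hu', if_neg hwv, if_neg hw', add_zero])
    (g + g') hd
  rw [map_add] at h0
  have h1 : Finsupp.linearCombination ℚ (fun u => (c u : ℚ)) g = g v := by
    rw [Finsupp.linearCombination_apply, Finsupp.sum, Finset.sum_eq_single v]
    · simp [hc]
    · intro u hu huv
      have hun := hg u (Finsupp.mem_support_iff.1 hu)
      have hu' : ¬ ∃ m, u.1 = v.1 ++ [m] := by
        rintro ⟨m, hm⟩
        have := congrArg List.length hm
        simp at this
        omega
      simp only [hc, if_neg huv, if_neg hu', Int.cast_zero, smul_zero]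
    · intro h
      exact absurd (Finsupp.mem_support_iff.2 hv) h
  have h2 : Finsupp.linearCombination ℚ (fun u => (c u : ℚ)) g' = 0 := by
    rw [Finsupp.linearCombination_apply, Finsupp.sum]
    refine Finset.sum_eq_zero fun u hu => ?_
    have hu0 := Finsupp.mem_support_iff.1 hu
    have hun := hg' u hu0
    have huv : u ≠ v := by
      rintro rfl
      omega
    have hu' : ¬ ∃ m, u.1 = v.1 ++ [m] := fun ⟨m, hm⟩ => hu0 (hcon u m hm)
    simp only [hc, if_neg huv, if_neg hu', Int.cast_zero, smul_zero]
  rwa [h1, h2, add_zero] at h0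

lemma exists_nsmul_of_half_mem {M : Type*} [AddCommGroup M] [Module ℚ M] {G : AddSubgroup M}
    {s : ℕ} (hs : s ≠ 0) (k : ℕ) {x : M} (hx : (1 / (2 * (s : ℚ) ^ k)) • x ∈ G) :
    ∃ h ∈ G, x = (s ^ k : ℕ) • h := by
  refine ⟨2 • (1 / (2 * (s : ℚ) ^ k)) • x, G.nsmul_mem hx 2, ?_⟩
  have : (s : ℚ) ≠ 0 := by exact_mod_cast hs
  rw [← Nat.cast_smul_eq_nsmul ℚ, ← Nat.cast_smul_eq_nsmul ℚ, smul_smul, smul_smul]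
  push_cast
  rw [show (s : ℚ) ^ k * 2 * (1 / (2 * (s : ℚ) ^ k)) = 1 by field_simp, one_smul]

/-- Let `T` be a tree on `ℕ` and `G_T` the associated group, built from sequences
`(pₙ)` and `(qₙ)` of pairwise distinct odd primes. Then `T` has an infinite branch
if and only if there is a sequence `(gₙ)` of nonzero elements of `G_T` such that
each `gₙ` is infinitely `pₙ`-divisible in `G_T` and each `gₙ + gₙ₊₁` is infinitely
`qₙ`-divisible in `G_T`. -/
theorem stmt_14 (p q : ℕ → ℕ)
    (hp : ∀ n, Nat.Prime (p n) ∧ Odd (p n)) (hq : ∀ n, Nat.Prime (q n) ∧ Odd (q n))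
    (hpinj : Function.Injective p) (hqinj : Function.Injective q)
    (hpq : ∀ n m, p n ≠ q m)
    (T : Set (List ℕ)) (hT : ∀ l ∈ T, ∀ l' : List ℕ, l' <+: l → l' ∈ T) :
    (∃ b : ℕ → ℕ, ∀ n : ℕ, (List.range n).map b ∈ T) ↔
      ∃ g : ℕ → (↥T →₀ ℚ),
        (∀ n, g n ∈ treeGroup T p q) ∧ (∀ n, g n ≠ 0) ∧
        (∀ n k : ℕ, ∃ h ∈ treeGroup T p q, g n = (p n ^ k : ℕ) • h) ∧
        (∀ n k : ℕ, ∃ h ∈ treeGroup T p q, g n + g (n + 1) = (q n ^ k : ℕ) • h) := by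
  constructor
  · rintro ⟨b, hb⟩
    let v : ℕ → T := fun n => ⟨(List.range n).map b, hb n⟩
    have hlen : ∀ n, (v n).1.length = n := fun n => by simp [v]
    have hP : ∀ n k : ℕ, ∃ h ∈ treeGroup T p q,
        Finsupp.single (v n) (1 : ℚ) = (p n ^ k : ℕ) • h := fun n k =>
      exists_nsmul_of_half_mem (hp n).1.ne_zero k
        (AddSubgroup.subset_closure (Or.inl ⟨k, v n, by rw [hlen]⟩))
    refine ⟨fun n => Finsupp.single (v n) 1, fun n => ?_, fun n => by simp, hP, fun n k => ?_⟩
    · obtain ⟨h, hh, e⟩ := hP n 0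
      simpa only [e] using AddSubgroup.nsmul_mem _ hh _
    · exact exists_nsmul_of_half_mem (hq n).1.ne_zero k
        (AddSubgroup.subset_closure (Or.inr ⟨k, v n, v (n + 1), b n,
          by simp [v, List.range_succ], by rw [hlen]⟩))
  · rintro ⟨g, -, hne, hgp, hgq⟩
    have hsupp : ∀ n v, g n v ≠ 0 → v.1.length = n := fun n v hv =>
      length_eq_of_divisible hp hq hpinj hpq (hgp n) hv
    have hstep : ∀ n l, (∃ h : l ∈ T, g n ⟨l, h⟩ ≠ 0) →
        ∃ m, ∃ h : l ++ [m] ∈ T, g (n + 1) ⟨l ++ [m], h⟩ ≠ 0 := by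
      rintro n l ⟨h, hl⟩
      obtain ⟨⟨w, hwT⟩, m, hw, hw0⟩ :=
        exists_succ_ne_zero hp hq hqinj hpq (hsupp n) (hsupp (n + 1)) (hgq n) hl
      dsimp only at hw
      subst hw
      exact ⟨m, hwT, hw0⟩
    choose! f hf using hstep
    let s : ℕ → List ℕ := fun n => Nat.rec [] (fun n l => l ++ [f n l]) n
    have hs : ∀ n, ∃ h : s n ∈ T, g n ⟨s n, h⟩ ≠ 0 := by
      intro n
      induction n with
      | zero =>
        obtain ⟨⟨l, hl⟩, hv⟩ := Finsupp.ne_iff.1 (hne 0)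
        have h0 : l = [] := List.length_eq_zero_iff.1 (hsupp 0 _ hv)
        subst h0
        exact ⟨hl, hv⟩
      | succ n ih => exact hf n (s n) ih
    refine ⟨fun n => f n (s n), fun n => ?_⟩
    have : (List.range n).map (fun n => f n (s n)) = s n := by
      induction n with
      | zero => rfl
      | succ n ih => simp only [List.range_succ, List.map_append, ih, List.map_cons,
          List.map_nil, s]
    rw [this]
    exact (hs n).1
end
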